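/- arXiv:2505.23594 — 2 statements merged into one kernel-verified Lean document; each statement's English description precedes it below -/
import Mathlib

section
/- Let A be an m×n matrix with i.i.d. N(0,1) entries, m ≤ n. Let x_o ∈ ℝ^n have entries in [x_min, x_max] with 0 < x_min ≤ x_max, and let g map θ ∈ ℝ^k to ℝ^n with Lipschitz constant 1 and take values with entries in [x_min, x_max]. Let x̂ = g(θ̂) and x̃ = g(θ̃) with ‖θ̂ − θ̃‖₂ ≤ δ, and suppose Σ̂ = (A X̂² Aᵀ)^{-1}, Σ̃ = (A X̃² Aᵀ)^{-1}, Σ_o = (A X_o² Aᵀ)^{-1} exist, where X̂ = diag(x̂), X̃ = diag(x̃), X_o = diag(x_o). Let w₁,…,w_L be i.i.d. N(0, σ_w² I_n), independent of A, and y_ℓ = A X_o w_ℓ. Define h(Σ) = (1/(L σ_w²)) Σ_{ℓ=1}^L y_ℓᵀ (Σ − Σ_o) y_ℓ − Tr((Σ − Σ_o) Σ_o^{-1}). Then there is a constant C̃ > 0 (depending only on x_min, x_max) such that |h(Σ̃) − h(Σ̂)| ≤ C̃·n·δ with probability at least 1 − O(e^{−m/2} + e^{−Ln/8}). -/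
open MeasureTheory ProbabilityTheory Matrix

/-- The measure of an `m × n` random matrix (represented as `Fin m → Fin n → ℝ`)
with i.i.d. standard Gaussian entries. -/
noncomputable def gaussMatrixMeasure (m n : ℕ) : Measure (Fin m → Fin n → ℝ) :=
  Measure.pi fun _ => Measure.pi fun _ => gaussianReal 0 1

/-- The measure of `L` i.i.d. `N(0, σw² Iₙ)` Gaussian vectors in `ℝⁿ`. -/
noncomputable def iidGaussVecs (L n : ℕ) (σw : ℝ) : Measure (Fin L → Fin n → ℝ) :=
  Measure.pi fun _ => Measure.pi fun _ => gaussianReal 0 ⟨σw ^ 2, sq_nonneg σw⟩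

/-- The centered empirical quadratic form
`h(Σ(x)) = (1/(Lσw²)) ∑ₗ yₗᵀ (Σ(x) − Σ₀) yₗ − Tr((Σ(x) − Σ₀) Σ₀⁻¹)`, where
`Σ(x) = (A X² Aᵀ)⁻¹`, `Σ₀ = (A X₀² Aᵀ)⁻¹` and `yₗ = A X₀ wₗ`. -/
noncomputable def centeredQuadForm (m n L : ℕ) (σw : ℝ) (xo : Fin n → ℝ)
    (A : Matrix (Fin m) (Fin n) ℝ) (w : Fin L → Fin n → ℝ) (x : Fin n → ℝ) : ℝ :=
  let So := (A * (Matrix.diagonal xo) ^ 2 * Aᵀ)⁻¹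
  let dS := (A * (Matrix.diagonal x) ^ 2 * Aᵀ)⁻¹ - So
  (1 / ((L : ℝ) * σw ^ 2)) *
      ∑ ℓ, (A.mulVec ((Matrix.diagonal xo).mulVec (w ℓ))) ⬝ᵥ
        dS.mulVec (A.mulVec ((Matrix.diagonal xo).mulVec (w ℓ))) -
    (dS * So⁻¹).trace

section DeterministicBounds

variable {m n : Type*} [Fintype m] [Fintype n] [DecidableEq n]

theorem dotProduct_gram_mulVec (A : Matrix m n ℝ) (x : n → ℝ) (u v : m → ℝ) :
    u ⬝ᵥ (A * diagonal x ^ 2 * Aᵀ) *ᵥ v = ∑ i, x i ^ 2 * ((Aᵀ *ᵥ u) i * (Aᵀ *ᵥ v) i) := by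
  rw [← mulVec_mulVec, ← mulVec_mulVec, dotProduct_mulVec, ← mulVec_transpose, diagonal_pow,
    dotProduct]
  refine Finset.sum_congr rfl fun i _ => ?_
  rw [mulVec_diagonal, Pi.pow_apply]
  ring

theorem det_gram_ne_zero_iff [DecidableEq m] (A : Matrix m n ℝ) {x : n → ℝ} (hx : ∀ i, x i ≠ 0) :
    (A * diagonal x ^ 2 * Aᵀ).det ≠ 0 ↔ ∀ u : m → ℝ, Aᵀ *ᵥ u = 0 → u = 0 := by
  rw [← not_iff_not, not_not, ← exists_mulVec_eq_zero_iff]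
  push Not
  refine exists_congr fun u => ?_
  rw [and_comm, and_congr_left_iff]
  intro _
  constructor
  · intro h
    have h0 := dotProduct_gram_mulVec A x u u
    rw [h, dotProduct_zero] at h0
    have h1 := (Finset.sum_eq_zero_iff_of_nonneg
      (fun i _ => mul_nonneg (sq_nonneg (x i)) (mul_self_nonneg ((Aᵀ *ᵥ u) i)))).1 h0.symm
    funext i
    have h2 := h1 i (Finset.mem_univ i)
    simpa [hx i] using h2
  · intro h
    rw [← mulVec_mulVec, h, mulVec_zero]

/-- Comparison of squared weights reverses for the quadratic forms of the inverse Gram matrices. -/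
theorem dotProduct_gram_inv_mulVec_le [DecidableEq m] (A : Matrix m n ℝ) {x y : n → ℝ} {c : ℝ}
    (hc : 0 < c)
    (hx : (A * diagonal x ^ 2 * Aᵀ).det ≠ 0) (hy : (A * diagonal y ^ 2 * Aᵀ).det ≠ 0)
    (hxy : ∀ i, x i ^ 2 ≤ c * y i ^ 2) (v : m → ℝ) :
    v ⬝ᵥ (A * diagonal y ^ 2 * Aᵀ)⁻¹ *ᵥ v ≤ c * (v ⬝ᵥ (A * diagonal x ^ 2 * Aᵀ)⁻¹ *ᵥ v) := by
  set P := A * diagonal x ^ 2 * Aᵀ with hP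
  set Q := A * diagonal y ^ 2 * Aᵀ with hQ
  set u := Q⁻¹ *ᵥ v with hu
  set z := P⁻¹ *ᵥ v with hz
  have hPz : P *ᵥ z = v := by
    rw [hz, mulVec_mulVec, mul_nonsing_inv _ hx.isUnit, one_mulVec]
  have hQu : Q *ᵥ u = v := by
    rw [hu, mulVec_mulVec, mul_nonsing_inv _ hy.isUnit, one_mulVec]
  have huz : v ⬝ᵥ u = ∑ i, x i ^ 2 * ((Aᵀ *ᵥ u) i * (Aᵀ *ᵥ z) i) := by
    rw [← dotProduct_gram_mulVec, ← hP, hPz, dotProduct_comm]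
  have hzz : v ⬝ᵥ z = ∑ i, x i ^ 2 * ((Aᵀ *ᵥ z) i * (Aᵀ *ᵥ z) i) := by
    rw [← dotProduct_gram_mulVec, ← hP, hPz, dotProduct_comm]
  have huu : v ⬝ᵥ u = ∑ i, y i ^ 2 * ((Aᵀ *ᵥ u) i * (Aᵀ *ᵥ u) i) := by
    rw [← dotProduct_gram_mulVec, ← hQ, hQu, dotProduct_comm]
  have key : 2 * (v ⬝ᵥ u) ≤ v ⬝ᵥ u + c * (v ⬝ᵥ z) := by
    nth_rewrite 1 [huz]
    rw [huu, hzz, Finset.mul_sum, Finset.mul_sum, ← Finset.sum_add_distrib]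
    refine Finset.sum_le_sum fun i _ => ?_
    set a := (Aᵀ *ᵥ u) i
    set b := (Aᵀ *ᵥ z) i
    have h1 : x i ^ 2 * a ^ 2 ≤ c * y i ^ 2 * a ^ 2 :=
      mul_le_mul_of_nonneg_right (hxy i) (sq_nonneg a)
    have h2 : 0 ≤ x i ^ 2 * (a - c * b) ^ 2 := by positivity
    refine le_of_mul_le_mul_left ?_ hc
    nlinarith
  linarith

/-- The orthogonal projection onto the row space of `A * diagonal x` is a contraction. -/
theorem dotProduct_gram_inv_mulVec_range_le [DecidableEq m] (A : Matrix m n ℝ) {x : n → ℝ}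
    (hx : (A * diagonal x ^ 2 * Aᵀ).det ≠ 0) (w : n → ℝ) :
    (A *ᵥ (diagonal x *ᵥ w)) ⬝ᵥ (A * diagonal x ^ 2 * Aᵀ)⁻¹ *ᵥ (A *ᵥ (diagonal x *ᵥ w)) ≤
      ∑ i, w i ^ 2 := by
  set P := A * diagonal x ^ 2 * Aᵀ with hP
  set v := A *ᵥ (diagonal x *ᵥ w) with hv
  set u := P⁻¹ *ᵥ v with hu
  have hPu : P *ᵥ u = v := by
    rw [hu, mulVec_mulVec, mul_nonsing_inv _ hx.isUnit, one_mulVec]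
  have huu : v ⬝ᵥ u = ∑ i, x i ^ 2 * ((Aᵀ *ᵥ u) i * (Aᵀ *ᵥ u) i) := by
    rw [← dotProduct_gram_mulVec, ← hP, hPu, dotProduct_comm]
  have huw : v ⬝ᵥ u = ∑ i, (Aᵀ *ᵥ u) i * (x i * w i) := by
    rw [dotProduct_comm, hv, dotProduct_mulVec, ← mulVec_transpose, dotProduct]
    simp only [mulVec_diagonal]
  have key : 2 * (v ⬝ᵥ u) ≤ v ⬝ᵥ u + ∑ i, w i ^ 2 := by
    nth_rewrite 1 [huw]
    rw [huu, Finset.mul_sum, ← Finset.sum_add_distrib]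
    refine Finset.sum_le_sum fun i _ => ?_
    nlinarith [sq_nonneg (x i * (Aᵀ *ᵥ u) i - w i)]
  linarith

theorem abs_dotProduct_gram_inv_sub_mulVec_le [DecidableEq m] (A : Matrix m n ℝ)
    {xo x y : n → ℝ} {t c : ℝ} (ht : 0 ≤ t) (hc : 0 < c)
    (ho : (A * diagonal xo ^ 2 * Aᵀ).det ≠ 0)
    (hx : (A * diagonal x ^ 2 * Aᵀ).det ≠ 0) (hy : (A * diagonal y ^ 2 * Aᵀ).det ≠ 0)
    (hxy : ∀ i, x i ^ 2 ≤ (1 + t) * y i ^ 2) (hyx : ∀ i, y i ^ 2 ≤ (1 + t) * x i ^ 2)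
    (hox : ∀ i, xo i ^ 2 ≤ c * x i ^ 2) (hoy : ∀ i, xo i ^ 2 ≤ c * y i ^ 2) (w : n → ℝ) :
    |(A *ᵥ (diagonal xo *ᵥ w)) ⬝ᵥ ((A * diagonal x ^ 2 * Aᵀ)⁻¹ - (A * diagonal y ^ 2 * Aᵀ)⁻¹) *ᵥ
      (A *ᵥ (diagonal xo *ᵥ w))| ≤ t * c * ∑ i, w i ^ 2 := by
  have h0 := dotProduct_gram_inv_mulVec_range_le A ho w
  set v := A *ᵥ (diagonal xo *ᵥ w)
  have h1 := dotProduct_gram_inv_mulVec_le A (by positivity) hx hy hxy v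
  have h2 := dotProduct_gram_inv_mulVec_le A (by positivity) hy hx hyx v
  have h3 := (dotProduct_gram_inv_mulVec_le A hc ho hx hox v).trans
    (mul_le_mul_of_nonneg_left h0 hc.le)
  have h4 := (dotProduct_gram_inv_mulVec_le A hc ho hy hoy v).trans
    (mul_le_mul_of_nonneg_left h0 hc.le)
  have h5 := mul_le_mul_of_nonneg_left h3 ht
  have h6 := mul_le_mul_of_nonneg_left h4 ht
  rw [sub_mulVec, dotProduct_sub, abs_le]
  constructor <;> linarith

theorem trace_mul_gram (A : Matrix m n ℝ) (x : n → ℝ) (M : Matrix m m ℝ) :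
    (M * (A * diagonal x ^ 2 * Aᵀ)).trace =
      ∑ j, (A *ᵥ (diagonal x *ᵥ Pi.single j 1)) ⬝ᵥ
        M *ᵥ (A *ᵥ (diagonal x *ᵥ Pi.single j 1)) := by
  have h : M * (A * diagonal x ^ 2 * Aᵀ) = M * (A * diagonal x) * (A * diagonal x)ᵀ := by
    rw [transpose_mul, diagonal_transpose, pow_two]
    simp only [Matrix.mul_assoc]
  rw [h, trace_mul_comm, trace]
  refine Finset.sum_congr rfl fun j _ => ?_
  rw [mulVec_mulVec, mulVec_mulVec, mulVec_single_one, mulVec_single_one, diag_apply, mul_apply]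
  rfl

end DeterministicBounds

theorem abs_centeredQuadForm_sub_le {m n L : ℕ} {σw t c : ℝ} (hL : 0 < L) (hσ : 0 < σw)
    (ht : 0 ≤ t) (hc : 0 < c) {xo x y : Fin n → ℝ} (ho : ∀ i, xo i ≠ 0) (hx : ∀ i, x i ≠ 0)
    (hy : ∀ i, y i ≠ 0)
    (hxy : ∀ i, x i ^ 2 ≤ (1 + t) * y i ^ 2) (hyx : ∀ i, y i ^ 2 ≤ (1 + t) * x i ^ 2)
    (hox : ∀ i, xo i ^ 2 ≤ c * x i ^ 2) (hoy : ∀ i, xo i ^ 2 ≤ c * y i ^ 2)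
    (A : Matrix (Fin m) (Fin n) ℝ) (w : Fin L → Fin n → ℝ) :
    |centeredQuadForm m n L σw xo A w x - centeredQuadForm m n L σw xo A w y| ≤
      t * c * ((1 / ((L : ℝ) * σw ^ 2)) * ∑ ℓ, ∑ i, w ℓ i ^ 2 + n) := by
  by_cases hA : ∀ u : Fin m → ℝ, Aᵀ *ᵥ u = 0 → u = 0
  · have hdo := (det_gram_ne_zero_iff A ho).2 hA
    have hdx := (det_gram_ne_zero_iff A hx).2 hA
    have hdy := (det_gram_ne_zero_iff A hy).2 hA
    have hbound := abs_dotProduct_gram_inv_sub_mulVec_le A ht hc hdo hdx hdy hxy hyx hox hoy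
    set M := (A * diagonal x ^ 2 * Aᵀ)⁻¹ - (A * diagonal y ^ 2 * Aᵀ)⁻¹ with hM
    have heq : centeredQuadForm m n L σw xo A w x - centeredQuadForm m n L σw xo A w y =
        (1 / ((L : ℝ) * σw ^ 2)) * ∑ ℓ, (A *ᵥ (diagonal xo *ᵥ w ℓ)) ⬝ᵥ
          M *ᵥ (A *ᵥ (diagonal xo *ᵥ w ℓ)) -
        ∑ j, (A *ᵥ (diagonal xo *ᵥ Pi.single j 1)) ⬝ᵥ
          M *ᵥ (A *ᵥ (diagonal xo *ᵥ Pi.single j 1)) := by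
      rw [← trace_mul_gram, hM]
      simp only [centeredQuadForm, nonsing_inv_nonsing_inv _ hdo.isUnit, sub_mulVec,
        dotProduct_sub, Finset.sum_sub_distrib, Matrix.sub_mul, trace_sub]
      ring
    rw [heq, mul_add]
    refine (abs_sub _ _).trans (add_le_add ?_ ?_)
    · rw [abs_mul, abs_of_nonneg (by positivity : 0 ≤ 1 / ((L : ℝ) * σw ^ 2)), mul_left_comm]
      refine mul_le_mul_of_nonneg_left ?_ (by positivity)
      rw [Finset.mul_sum]
      exact (Finset.abs_sum_le_sum_abs _ _).trans (Finset.sum_le_sum fun ℓ _ => hbound (w ℓ))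
    · refine (Finset.abs_sum_le_sum_abs _ _).trans
        ((Finset.sum_le_sum fun j _ => hbound (Pi.single j 1)).trans_eq ?_)
      simp [Pi.single_apply, mul_comm]
  · have hdx := fun h => hA ((det_gram_ne_zero_iff A hx).1 h)
    have hdy := fun h => hA ((det_gram_ne_zero_iff A hy).1 h)
    have hxi := nonsing_inv_apply_not_isUnit (A * diagonal x ^ 2 * Aᵀ)
      (fun h => hdx h.ne_zero)
    have hyi := nonsing_inv_apply_not_isUnit (A * diagonal y ^ 2 * Aᵀ)
      (fun h => hdy h.ne_zero)
    simp only [centeredQuadForm, hxi, hyi, sub_self, abs_zero]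
    positivity

section ChiSquareTail

theorem integral_exp_sq_div_gaussianReal {v : NNReal} (hv : v ≠ 0) :
    ∫ x, Real.exp (x ^ 2 / (4 * v)) ∂gaussianReal 0 v = √2 := by
  have hv' : (0 : ℝ) < v := by positivity
  rw [integral_gaussianReal_eq_integral_smul hv]
  have h : ∀ x : ℝ, gaussianPDFReal 0 v x • Real.exp (x ^ 2 / (4 * v)) =
      √2 * gaussianPDFReal 0 (2 * v) x := by
    intro x
    have h2 : √(2 * Real.pi * (2 * (v : ℝ))) = √2 * √(2 * Real.pi * v) := by
      rw [← Real.sqrt_mul (by norm_num)]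
      congr 1
      ring
    simp only [gaussianPDFReal, smul_eq_mul, NNReal.coe_mul, NNReal.coe_ofNat, sub_zero]
    rw [mul_assoc, ← Real.exp_add, h2, mul_inv, ← mul_assoc, ← mul_assoc,
      mul_inv_cancel₀ (by positivity), one_mul]
    congr 2
    field_simp
    ring
  simp_rw [h]
  rw [integral_const_mul, integral_gaussianPDFReal_eq_one 0 (mul_ne_zero two_ne_zero hv), mul_one]

theorem integrable_exp_sq_div_gaussianReal {v : NNReal} (hv : v ≠ 0) :
    Integrable (fun x => Real.exp (x ^ 2 / (4 * v))) (gaussianReal 0 v) := by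
  by_contra h
  have h1 := integral_exp_sq_div_gaussianReal hv
  rw [integral_undef h] at h1
  exact (by positivity : √(2 : ℝ) ≠ 0) h1.symm

instance isProbabilityMeasure_gaussMatrixMeasure (m n : ℕ) :
    IsProbabilityMeasure (gaussMatrixMeasure m n) := by
  unfold gaussMatrixMeasure
  infer_instance

theorem iidGaussVecs_eq_pi (L n : ℕ) {σw : ℝ} {v : NNReal} (hv : (v : ℝ) = σw ^ 2) :
    iidGaussVecs L n σw = Measure.pi fun _ => Measure.pi fun _ => gaussianReal 0 v := by
  obtain rfl : v = ⟨σw ^ 2, sq_nonneg σw⟩ := NNReal.eq hv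
  rfl

instance isProbabilityMeasure_iidGaussVecs (L n : ℕ) (σw : ℝ) :
    IsProbabilityMeasure (iidGaussVecs L n σw) := by
  rw [iidGaussVecs_eq_pi L n (Real.coe_toNNReal _ (sq_nonneg σw))]
  infer_instance

/-- Chernoff bound for a chi-square variable with `L * n` degrees of freedom. -/
theorem iidGaussVecs_real_sum_sq_ge_le (L n : ℕ) {σw : ℝ} (hσ : 0 < σw) :
    (iidGaussVecs L n σw).real {w | 4 * ((L : ℝ) * n) * σw ^ 2 ≤ ∑ ℓ, ∑ i, w ℓ i ^ 2} ≤
      Real.exp (-((L : ℝ) * n) / 8) := by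
  obtain ⟨v, hvc⟩ : ∃ v : NNReal, (v : ℝ) = σw ^ 2 := ⟨_, Real.coe_toNNReal _ (sq_nonneg σw)⟩
  have hv : v ≠ 0 := by
    rw [← NNReal.coe_ne_zero, hvc]
    positivity
  let f : (Fin L → Fin n → ℝ) → ℝ := fun w => ∏ ℓ, ∏ i, Real.exp (w ℓ i ^ 2 / (4 * v))
  have hf : ∀ w, f w = Real.exp ((∑ ℓ, ∑ i, w ℓ i ^ 2) / (4 * σw ^ 2)) := by
    intro w
    simp only [f, ← Real.exp_sum, ← Finset.sum_div, hvc]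
  have hint : Integrable f (iidGaussVecs L n σw) := by
    rw [iidGaussVecs_eq_pi L n hvc]
    exact Integrable.fintype_prod
      (f := fun _ (w : Fin n → ℝ) => ∏ i, Real.exp (w i ^ 2 / (4 * v)))
      fun _ => Integrable.fintype_prod (f := fun _ x => Real.exp (x ^ 2 / (4 * v)))
        fun _ => integrable_exp_sq_div_gaussianReal hv
  have hval : ∫ w, f w ∂iidGaussVecs L n σw = √2 ^ (L * n) := by
    rw [iidGaussVecs_eq_pi L n hvc,
      integral_fintype_prod_eq_pow (fun w : Fin n → ℝ => ∏ i, Real.exp (w i ^ 2 / (4 * v))),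
      integral_fintype_prod_eq_pow (fun x : ℝ => Real.exp (x ^ 2 / (4 * v))),
      integral_exp_sq_div_gaussianReal hv, Fintype.card_fin, Fintype.card_fin, ← pow_mul, mul_comm]
  have hset : {w : Fin L → Fin n → ℝ | 4 * ((L : ℝ) * n) * σw ^ 2 ≤ ∑ ℓ, ∑ i, w ℓ i ^ 2} =
      {w | Real.exp ((L : ℝ) * n) ≤ f w} := by
    ext w
    rw [Set.mem_ofPred_eq, Set.mem_ofPred_eq, hf, Real.exp_le_exp, le_div_iff₀ (by positivity)]
    ring_nf
  have hmarkov := mul_meas_ge_le_integral_of_nonneg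
    (ae_of_all _ fun w => by rw [hf]; positivity) hint (Real.exp ((L : ℝ) * n))
  rw [hval, ← hset] at hmarkov
  have hsqrt : √2 ≤ Real.exp (7 / 8) := by
    refine (Real.sqrt_le_iff.2 ⟨by norm_num, by norm_num⟩ : √2 ≤ 7 / 8 + 1).trans ?_
    exact Real.add_one_le_exp _
  have hpow : √2 ^ (L * n) ≤ Real.exp ((L : ℝ) * n) * Real.exp (-((L : ℝ) * n) / 8) := by
    refine (pow_le_pow_left₀ (by positivity) hsqrt _).trans_eq ?_
    rw [← Real.exp_nat_mul, ← Real.exp_add]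
    push_cast
    ring_nf
  exact le_of_mul_le_mul_left (hmarkov.trans hpow) (Real.exp_pos _)

end ChiSquareTail

/-- Entries of `x` and `y` bounded below by `a` and above by `b` at distance at most `d`
have squares within a factor `1 + 2 * b / a ^ 2 * d`. -/
theorem sq_le_one_add_mul_sq {a b d x y : ℝ} (ha : 0 < a) (hx : x ∈ Set.Icc a b)
    (hy : y ∈ Set.Icc a b) (hd : |x - y| ≤ d) :
    x ^ 2 ≤ (1 + 2 * b / a ^ 2 * d) * y ^ 2 := by
  obtain ⟨hx1, hx2⟩ := hx
  obtain ⟨hy1, hy2⟩ := hy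
  have hd0 : 0 ≤ d := (abs_nonneg _).trans hd
  have hb : 0 < b := by linarith
  have h1 : x - y ≤ d := (le_abs_self _).trans hd
  have h2 : 1 ≤ y ^ 2 / a ^ 2 := by
    rw [one_le_div (by positivity)]
    exact pow_le_pow_left₀ ha.le hy1 2
  have h3 : 2 * b * d * 1 ≤ 2 * b * d * (y ^ 2 / a ^ 2) :=
    mul_le_mul_of_nonneg_left h2 (by positivity)
  have h4 : (1 + 2 * b / a ^ 2 * d) * y ^ 2 = y ^ 2 + 2 * b * d * (y ^ 2 / a ^ 2) := by ring
  rw [h4]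
  nlinarith

theorem sq_le_div_sq_mul_sq {a b x y : ℝ} (ha : 0 < a) (hx : x ∈ Set.Icc a b)
    (hy : y ∈ Set.Icc a b) : x ^ 2 ≤ b ^ 2 / a ^ 2 * y ^ 2 := by
  rw [div_mul_eq_mul_div, le_div_iff₀ (by positivity)]
  exact mul_le_mul (pow_le_pow_left₀ (ha.le.trans hx.1) hx.2 2) (pow_le_pow_left₀ ha.le hy.1 2)
    (by positivity) (by positivity)

/-- With probability at least `1 − O(e^{−m/2} + e^{−Ln/8})` over the Gaussian matrix `A` and
the speckle vectors `w₁, …, w_L`, one has `|h(Σ̃) − h(Σ̂)| ≤ C̃ n δ`, where `x̂ = g(θ̂)`,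
`x̃ = g(θ̃)`, `‖θ̂ − θ̃‖₂ ≤ δ`, `g` is `1`-Lipschitz with values whose entries lie in
`[x_min, x_max]`, and `C̃` depends only on `x_min, x_max`. -/
theorem centeredQuadForm_delta_error (xmin xmax : ℝ) (hmin : 0 < xmin) (hmm : xmin ≤ xmax) :
    ∃ Ct cO : ℝ, 0 < Ct ∧ 0 < cO ∧
      ∀ (m n k L : ℕ) (σw δ : ℝ)
        (g : EuclideanSpace ℝ (Fin k) → EuclideanSpace ℝ (Fin n))
        (θh θt : EuclideanSpace ℝ (Fin k)),
        m ≤ n → 0 < m → 0 < L → 0 < σw →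
        LipschitzWith 1 g →
        (∀ θ : EuclideanSpace ℝ (Fin k), ∀ i, g θ i ∈ Set.Icc xmin xmax) →
        dist θh θt ≤ δ →
        ∀ xo : Fin n → ℝ, (∀ i, xo i ∈ Set.Icc xmin xmax) →
        ENNReal.ofReal (1 - cO * (Real.exp (-(m : ℝ) / 2) + Real.exp (-((L : ℝ) * n) / 8))) ≤
          ((gaussMatrixMeasure m n).prod (iidGaussVecs L n σw))
            {p | |centeredQuadForm m n L σw xo (Matrix.of p.1) p.2 (fun i => g θt i) -
                centeredQuadForm m n L σw xo (Matrix.of p.1) p.2 (fun i => g θh i)| ≤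
              Ct * (n : ℝ) * δ} := by
  have hmax : 0 < xmax := hmin.trans_le hmm
  refine ⟨2 * xmax / xmin ^ 2 * (xmax ^ 2 / xmin ^ 2) * 5, 1, by positivity, one_pos, ?_⟩
  intro m n k L σw δ g θh θt _ _ hL hσ hg hgmem hdist xo hxo
  have hδ : 0 ≤ δ := dist_nonneg.trans hdist
  have hclose : ∀ i, |g θt i - g θh i| ≤ δ := by
    intro i
    have h1 : ‖(g θt - g θh) i‖ ≤ ‖g θt - g θh‖ := PiLp.norm_apply_le _ i
    have h2 := hg.dist_le_mul θt θh
    rw [NNReal.coe_one, one_mul, dist_comm θt, dist_eq_norm] at h2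
    exact h1.trans (h2.trans hdist)
  have hne : ∀ {r : ℝ}, r ∈ Set.Icc xmin xmax → r ≠ 0 := fun hr => (hmin.trans_le hr.1).ne'
  set S : Set (Fin L → Fin n → ℝ) :=
    {w | 4 * ((L : ℝ) * n) * σw ^ 2 ≤ ∑ ℓ, ∑ i, w ℓ i ^ 2} with hS
  have hSm : MeasurableSet S := measurableSet_le (by fun_prop) (by fun_prop)
  have hsub : Set.univ ×ˢ Sᶜ ⊆ {p : (Fin m → Fin n → ℝ) × (Fin L → Fin n → ℝ) |
      |centeredQuadForm m n L σw xo (Matrix.of p.1) p.2 (fun i => g θt i) -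
        centeredQuadForm m n L σw xo (Matrix.of p.1) p.2 (fun i => g θh i)| ≤
      2 * xmax / xmin ^ 2 * (xmax ^ 2 / xmin ^ 2) * 5 * (n : ℝ) * δ} := by
    rintro ⟨A, w⟩ ⟨-, hw⟩
    have hw' : ∑ ℓ, ∑ i, w ℓ i ^ 2 ≤ 4 * ((L : ℝ) * n) * σw ^ 2 := by
      rw [Set.mem_compl_iff, hS, Set.mem_ofPred_eq, not_le] at hw
      exact hw.le
    refine (abs_centeredQuadForm_sub_le (t := 2 * xmax / xmin ^ 2 * δ)
      (c := xmax ^ 2 / xmin ^ 2) hL hσ (by positivity) (by positivity) (fun i => hne (hxo i))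
      (fun i => hne (hgmem θt i)) (fun i => hne (hgmem θh i))
      (fun i => sq_le_one_add_mul_sq hmin (hgmem θt i) (hgmem θh i) (hclose i))
      (fun i => sq_le_one_add_mul_sq hmin (hgmem θh i) (hgmem θt i)
        ((abs_sub_comm _ _).trans_le (hclose i)))
      (fun i => sq_le_div_sq_mul_sq hmin (hxo i) (hgmem θt i))
      (fun i => sq_le_div_sq_mul_sq hmin (hxo i) (hgmem θh i)) (Matrix.of A) w).trans ?_
    have h1 : 1 / ((L : ℝ) * σw ^ 2) * ∑ ℓ, ∑ i, w ℓ i ^ 2 ≤ 4 * n := by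
      rw [one_div_mul_eq_div, div_le_iff₀ (by positivity)]
      linarith
    have h2 : 1 / ((L : ℝ) * σw ^ 2) * ∑ ℓ, ∑ i, w ℓ i ^ 2 + n ≤ 5 * n := by linarith
    refine (mul_le_mul_of_nonneg_left h2 (by positivity)).trans_eq ?_
    ring
  refine le_trans ?_ (measure_mono hsub)
  rw [Measure.prod_prod, measure_univ, one_mul, one_mul, ← ofReal_measureReal]
  refine ENNReal.ofReal_le_ofReal ?_
  rw [probReal_compl_eq_one_sub hSm]
  have htail := iidGaussVecs_real_sum_sq_ge_le L n hσ
  have hexp := Real.exp_pos (-(m : ℝ) / 2)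
  linarith
end

section
/- Let A be an m×n matrix with i.i.d. N(0,1) entries. For d ∈ ℝ^n let D = diag(d). Then for every t > 0, P( ‖A D Aᵀ‖_HS² ≤ m(m−1)·Σ_{i=1}^n d_i² − t ) ≤ 2C·exp( −c·min( t² / (C² ‖d‖_∞⁴ q_{m,n}), t / (C ‖d‖_∞² q̃_{m,n}) ) ) + 2e^{−n/2}, where q_{m,n} = m²(2√n + √m)⁴, q̃_{m,n} = (2√n + √m)², and C, c are the absolute constants from the decoupling inequality for U-processes and the Hanson–Wright inequality, respectively. -/
open MeasureTheory ProbabilityTheory Matrix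

/-- Squared Hilbert–Schmidt (Frobenius) norm `‖M‖_HS²`. -/
noncomputable def frobSq {m n : ℕ} (M : Matrix (Fin m) (Fin n) ℝ) : ℝ :=
  ∑ i, ∑ j, (M i j) ^ 2

/-- Entrywise sup-norm of a vector. -/
noncomputable def supNorm {n : ℕ} (v : Fin n → ℝ) : ℝ := ⨆ i, |v i|

lemma integral_exp_neg_mul_sq_gaussianReal {s : ℝ} (hs : -(1 / 4) ≤ s) :
    ∫ x, Real.exp (-s * x ^ 2) ∂gaussianReal 0 1 = (√(1 + 2 * s))⁻¹ := by
  have h : ∀ x : ℝ, gaussianPDFReal 0 1 x • Real.exp (-s * x ^ 2) =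
      (√(2 * Real.pi))⁻¹ * Real.exp (-(s + 1 / 2) * x ^ 2) := by
    intro x
    simp only [gaussianPDFReal, NNReal.coe_one, mul_one, sub_zero, smul_eq_mul]
    rw [mul_assoc, ← Real.exp_add]
    congr 2
    ring
  rw [integral_gaussianReal_eq_integral_smul one_ne_zero]
  simp_rw [h]
  rw [integral_const_mul, integral_gaussian, ← Real.sqrt_inv, ← Real.sqrt_inv,
    ← Real.sqrt_mul (by positivity)]
  congr 1
  have : 0 < s + 1 / 2 := by linarith
  rw [show 1 + 2 * s = 2 * (s + 1 / 2) by ring]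
  field_simp

lemma inv_sqrt_one_add_le_exp {s : ℝ} (hs : -(1 / 4) ≤ s) :
    (√(1 + 2 * s))⁻¹ ≤ Real.exp (-s + 4 * s ^ 2) := by
  have hpos : 0 < 1 + 2 * s := by linarith
  have hlog : 2 * s - 8 * s ^ 2 ≤ Real.log (1 + 2 * s) := by
    refine le_trans ?_ (Real.one_sub_inv_le_log_of_pos hpos)
    rw [← sub_nonneg]
    have : 1 - (1 + 2 * s)⁻¹ - (2 * s - 8 * s ^ 2) = 4 * s ^ 2 * (1 + 4 * s) / (1 + 2 * s) := by
      field_simp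
      ring
    rw [this]
    have : 0 ≤ 1 + 4 * s := by linarith
    positivity
  rw [← Real.exp_log (inv_pos.2 (Real.sqrt_pos.2 hpos)), Real.exp_le_exp, Real.log_inv,
    Real.log_sqrt hpos.le]
  linarith

lemma lintegral_exp_neg_sum_sq_le {ι : Type*} [Fintype ι] (s : ι → ℝ)
    (hs : ∀ k, -(1 / 4) ≤ s k) :
    ∫⁻ x, ENNReal.ofReal (Real.exp (-∑ k, s k * x k ^ 2))
        ∂(Measure.pi fun _ : ι => gaussianReal 0 1) ≤
      ENNReal.ofReal (Real.exp (-∑ k, s k + 4 * ∑ k, s k ^ 2)) := by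
  have hint : ∀ k, Integrable (fun x : ℝ => Real.exp (-s k * x ^ 2)) (gaussianReal 0 1) := by
    intro k
    by_contra h
    have := integral_undef h
    rw [integral_exp_neg_mul_sq_gaussianReal (hs k), inv_eq_zero, Real.sqrt_eq_zero'] at this
    linarith [hs k]
  have hprod : ∀ x : ι → ℝ, Real.exp (-∑ k, s k * x k ^ 2) =
      ∏ k, Real.exp (-s k * x k ^ 2) := by
    intro x
    rw [← Real.exp_sum, ← Finset.sum_neg_distrib]
    simp
  simp_rw [hprod]
  rw [← ofReal_integral_eq_lintegral_ofReal (Integrable.fintype_prod hint)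
    (ae_of_all _ fun x => Finset.prod_nonneg fun k _ => (Real.exp_pos _).le)]
  apply ENNReal.ofReal_le_ofReal
  rw [integral_fintype_prod_eq_prod (f := fun k x => Real.exp (-s k * x ^ 2)),
    Finset.mul_sum, ← Finset.sum_neg_distrib, ← Finset.sum_add_distrib, Real.exp_sum]
  refine Finset.prod_le_prod (fun k _ => integral_nonneg fun x => (Real.exp_pos _).le) fun k _ => ?_
  rw [integral_exp_neg_mul_sq_gaussianReal (hs k)]
  exact inv_sqrt_one_add_le_exp (hs k)

lemma measurable_ofReal_exp_sum_adapted {E : Type*} [MeasurableSpace E]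
    (H : ∀ k : ℕ, (Fin k → E) → E → ℝ)
    (hmeas : ∀ k, Measurable fun p : (Fin k → E) × E => H k p.1 p.2) (m : ℕ) :
    Measurable fun a : Fin m → E => ENNReal.ofReal
      (Real.exp (∑ j : Fin m, H j (fun i => a (i.castLE j.2.le)) (a j))) := by
  refine (Real.measurable_exp.comp (Finset.measurable_sum _ fun j _ => ?_)).ennreal_ofReal
  have hg : Measurable fun a : Fin m → E => ((fun i : Fin j => a (i.castLE j.2.le)), a j) := by
    fun_prop
  exact (hmeas j).comp hg

lemma lintegral_pi_exp_sum_le_one {E : Type*} [MeasurableSpace E] (γ : Measure E)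
    [IsProbabilityMeasure γ] (H : ∀ k : ℕ, (Fin k → E) → E → ℝ)
    (hmeas : ∀ k, Measurable fun p : (Fin k → E) × E => H k p.1 p.2)
    (hH : ∀ k B, ∫⁻ x, ENNReal.ofReal (Real.exp (H k B x)) ∂γ ≤ 1) (m : ℕ) :
    ∫⁻ a, ENNReal.ofReal (Real.exp (∑ j : Fin m, H j (fun i => a (i.castLE j.2.le)) (a j)))
      ∂(Measure.pi fun _ : Fin m => γ) ≤ 1 := by
  induction m with
  | zero => simp
  | succ m ih =>
    have hmp := (measurePreserving_piFinSuccAbove (fun _ : Fin (m + 1) => γ) (Fin.last m)).symm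
    have hF := measurable_ofReal_exp_sum_adapted H hmeas (m + 1)
    rw [← hmp.lintegral_comp hF]
    refine (lintegral_prod_symm _ (hF.comp hmp.measurable).aemeasurable).trans_le ?_
    refine le_trans (lintegral_mono fun B => ?_) ih
    calc _ = ∫⁻ x, ENNReal.ofReal
          (Real.exp (∑ j : Fin m, H j (fun i => B (i.castLE j.2.le)) (B j))) *
            ENNReal.ofReal (Real.exp (H m B x)) ∂γ := by
          refine lintegral_congr fun x => ?_
          rw [Function.comp_apply, ← ENNReal.ofReal_mul (Real.exp_pos _).le, ← Real.exp_add,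
            Fin.sum_univ_castSucc]
          have h1 : ∀ i : Fin m, (MeasurableEquiv.piFinSuccAbove (fun _ : Fin (m + 1) => E)
              (Fin.last m)).symm (x, B) i.castSucc = B i := by
            intro i
            simp [MeasurableEquiv.piFinSuccAbove]
          have h2 : (MeasurableEquiv.piFinSuccAbove (fun _ : Fin (m + 1) => E)
              (Fin.last m)).symm (x, B) (Fin.last m) = x := by
            simp [MeasurableEquiv.piFinSuccAbove]
          rw [h2]
          simp_rw [h1]
          congr 3
          · refine Finset.sum_congr rfl fun j _ => ?_
            congr 1
            funext i
            exact h1 (i.castLE j.2.le)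
          · congr 1
            funext i
            exact h1 i
      _ ≤ _ := by
          rw [lintegral_const_mul']
          · exact mul_le_of_le_one_right' (hH m B)
          · exact ENNReal.ofReal_ne_top

lemma measure_pi_le_sum_le {E : Type*} [MeasurableSpace E] (γ : Measure E)
    [IsProbabilityMeasure γ] (H : ∀ k : ℕ, (Fin k → E) → E → ℝ)
    (hmeas : ∀ k, Measurable fun p : (Fin k → E) × E => H k p.1 p.2)
    (hH : ∀ k B, ∫⁻ x, ENNReal.ofReal (Real.exp (H k B x)) ∂γ ≤ 1) (m : ℕ) (s : ℝ) :
    (Measure.pi fun _ : Fin m => γ)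
        {a | s ≤ ∑ j : Fin m, H j (fun i => a (i.castLE j.2.le)) (a j)} ≤
      ENNReal.ofReal (Real.exp (-s)) := by
  have hF := measurable_ofReal_exp_sum_adapted H hmeas m
  have h := meas_ge_le_lintegral_div (μ := Measure.pi fun _ : Fin m => γ) hF.aemeasurable
    (ε := ENNReal.ofReal (Real.exp s)) (by simp [Real.exp_pos]) ENNReal.ofReal_ne_top
  refine le_trans (measure_mono fun a ha => ?_) (h.trans ?_)
  · exact ENNReal.ofReal_le_ofReal (Real.exp_le_exp.2 ha)
  · rw [Real.exp_neg, ENNReal.ofReal_inv_of_pos (Real.exp_pos _), ENNReal.div_eq_inv_mul]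
    exact mul_le_of_le_one_right' (lintegral_pi_exp_sum_le_one γ H hmeas hH m)

lemma sum_eigenvalues_sq {n : Type*} [Fintype n] [DecidableEq n] {M : Matrix n n ℝ}
    (hM : M.IsHermitian) : ∑ k, hM.eigenvalues k ^ 2 = (M * M).trace := by
  have h := hM.spectral_theorem
  have h2 : M * M = Unitary.conjStarAlgAut ℝ _ hM.eigenvectorUnitary
      (diagonal (fun k => hM.eigenvalues k ^ 2)) := by
    conv_lhs => rw [h]
    rw [← map_mul, diagonal_mul_diagonal]
    congr 2
    funext k
    simp [sq]
  rw [h2, Unitary.conjStarAlgAut_apply, mul_assoc, trace_mul_comm, mul_assoc]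
  simp [trace_diagonal]

lemma pi_gaussianReal_eq_map_orthonormalBasis {ι : Type*} [Fintype ι]
    (b : OrthonormalBasis ι ℝ (EuclideanSpace ℝ ι)) :
    (Measure.pi fun _ : ι => gaussianReal 0 1) =
      (Measure.pi fun _ : ι => gaussianReal 0 1).map
        (fun g => WithLp.ofLp (∑ k, g k • b k)) := by
  have h := (map_pi_eq_stdGaussian (ι := ι)).trans (stdGaussian_eq_map_pi_orthonormalBasis b)
  have h' := congrArg (Measure.map (WithLp.ofLp : EuclideanSpace ℝ ι → ι → ℝ)) h
  rw [Measure.map_map (by fun_prop) (by fun_prop),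
    Measure.map_map (by fun_prop) (by fun_prop)] at h'
  simpa [Function.comp_def] using h'

/-- Exponential moment of the Gaussian quadratic form `x ↦ ∑ i, ⟨v i, x⟩²`. -/
lemma lintegral_exp_neg_sum_dotProduct_sq_le {ι κ : Type*} [Fintype ι] [Fintype κ]
    (v : κ → ι → ℝ) (l : ℝ) (hl : -(1 / 4) ≤ l * ∑ i, v i ⬝ᵥ v i) :
    ∫⁻ x, ENNReal.ofReal (Real.exp (-l * ∑ i, (v i ⬝ᵥ x) ^ 2))
        ∂(Measure.pi fun _ : ι => gaussianReal 0 1) ≤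
      ENNReal.ofReal (Real.exp (-l * ∑ i, v i ⬝ᵥ v i +
        4 * l ^ 2 * ∑ i, ∑ j, (v i ⬝ᵥ v j) ^ 2)) := by
  classical
  set V : Matrix κ ι ℝ := Matrix.of v with hV
  have hM : (Vᵀ * V).IsHermitian := by
    simpa using isHermitian_conjTranspose_mul_self V
  have hpsd : (Vᵀ * V).PosSemidef := by
    simpa using posSemidef_conjTranspose_mul_self V
  set μ := hM.eigenvalues with hμ
  set b := hM.eigenvectorBasis with hb
  have hμ0 : ∀ k, 0 ≤ μ k := hpsd.eigenvalues_nonneg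
  have hsum : ∑ k, μ k = ∑ i, v i ⬝ᵥ v i := by
    have := hM.trace_eq_sum_eigenvalues
    simp only [RCLike.ofReal_real_eq_id, id] at this
    rw [← this, trace_mul_comm]
    simp [Matrix.trace, Matrix.mul_apply, dotProduct, hV]
  have hsq : ∑ k, μ k ^ 2 = ∑ i, ∑ j, (v i ⬝ᵥ v j) ^ 2 := by
    rw [hμ, sum_eigenvalues_sq, Matrix.mul_assoc, trace_mul_comm, Matrix.mul_assoc,
      Matrix.mul_assoc, ← Matrix.mul_assoc]
    simp only [Matrix.trace, diag_apply, Matrix.mul_apply (M := V * Vᵀ)]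
    refine Finset.sum_congr rfl fun i _ => Finset.sum_congr rfl fun j _ => ?_
    rw [sq]
    congr 1
    simp [Matrix.mul_apply, dotProduct, hV, mul_comm]
  have hform : ∀ g : ι → ℝ, ∑ i, (v i ⬝ᵥ WithLp.ofLp (∑ k, g k • b k)) ^ 2 =
      ∑ k, μ k * g k ^ 2 := by
    intro g
    set x : EuclideanSpace ℝ ι := ∑ k, g k • b k with hx
    have h1 : ∑ i, (v i ⬝ᵥ WithLp.ofLp x) ^ 2 =
        WithLp.ofLp x ⬝ᵥ ((Vᵀ * V) *ᵥ WithLp.ofLp x) := by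
      rw [← mulVec_mulVec, dotProduct_mulVec, vecMul_transpose]
      simp [dotProduct, mulVec, hV, sq]
    have h2 : (Vᵀ * V) *ᵥ WithLp.ofLp x =
        WithLp.ofLp (∑ k, (μ k * g k) • b k) := by
      rw [hx, WithLp.ofLp_sum, WithLp.ofLp_sum, mulVec_sum]
      refine Finset.sum_congr rfl fun k _ => ?_
      rw [WithLp.ofLp_smul, mulVec_smul, hM.mulVec_eigenvectorBasis, WithLp.ofLp_smul, smul_smul,
        mul_comm]
    have h3 : inner ℝ (∑ k, (μ k * g k) • b k) x = ∑ k, (μ k * g k) * g k := by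
      rw [hx, b.orthonormal.inner_sum]
      simp
    rw [h1, h2]
    rw [EuclideanSpace.inner_eq_star_dotProduct] at h3
    simp only [star_trivial] at h3
    rw [h3]
    exact Finset.sum_congr rfl fun k _ => by ring
  rw [pi_gaussianReal_eq_map_orthonormalBasis b, lintegral_map]
  · simp_rw [hform]
    have hs : ∀ k, -(1 / 4) ≤ l * μ k := by
      intro k
      have hk : μ k ≤ ∑ i, v i ⬝ᵥ v i :=
        hsum ▸ Finset.single_le_sum (fun k _ => hμ0 k) (Finset.mem_univ k)
      rcases le_total 0 l with h | h
      · have := mul_nonneg h (hμ0 k)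
        linarith
      · have := mul_le_mul_of_nonpos_left hk h
        linarith
    convert lintegral_exp_neg_sum_sq_le (fun k => l * μ k) hs using 4
    · rw [Finset.mul_sum, ← Finset.sum_neg_distrib]
      exact congrArg Real.exp (Finset.sum_congr rfl fun k _ => by ring)
    · rw [← Finset.mul_sum, hsum]
      ring
    · simp_rw [mul_pow]
      rw [← Finset.mul_sum, hsq]
      ring
  · simp only [dotProduct]
    fun_prop
  · fun_prop

lemma lintegral_exp_le_one_of_le {E : Type*} [MeasurableSpace E] {γ : Measure E}
    {f h : E → ℝ} {B : ℝ} (hf : ∫⁻ x, ENNReal.ofReal (Real.exp (f x)) ∂γ ≤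
      ENNReal.ofReal (Real.exp B)) (hh : ∀ x, h x ≤ f x - B) :
    ∫⁻ x, ENNReal.ofReal (Real.exp (h x)) ∂γ ≤ 1 := by
  calc ∫⁻ x, ENNReal.ofReal (Real.exp (h x)) ∂γ
      ≤ ∫⁻ x, ENNReal.ofReal (Real.exp (-B)) * ENNReal.ofReal (Real.exp (f x)) ∂γ := by
        refine lintegral_mono fun x => ?_
        rw [← ENNReal.ofReal_mul (Real.exp_pos _).le, ← Real.exp_add]
        exact ENNReal.ofReal_le_ofReal (Real.exp_le_exp.2 (by linarith [hh x]))
    _ ≤ ENNReal.ofReal (Real.exp (-B)) * ENNReal.ofReal (Real.exp B) := by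
        rw [lintegral_const_mul' _ _ ENNReal.ofReal_ne_top]
        gcongr
    _ = 1 := by
        rw [← ENNReal.ofReal_mul (Real.exp_pos _).le, ← Real.exp_add]
        simp

lemma exists_finset_net_closedBall (E : Type*) [NormedAddCommGroup E] [NormedSpace ℝ E]
    [FiniteDimensional ℝ E] :
    ∃ N : Finset E, N.card ≤ 5 ^ Module.finrank ℝ E ∧ (∀ c ∈ N, ‖c‖ ≤ 2) ∧
      ∀ x : E, ‖x‖ ≤ 2 → ∃ c ∈ N, ‖x - c‖ < 1 := by
  classical
  by_contra! hcon
  have hgrow : ∀ k : ℕ, ∃ N : Finset E, N.card = k ∧ (∀ c ∈ N, ‖c‖ ≤ 2) ∧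
      ∀ c ∈ N, ∀ c' ∈ N, c ≠ c' → 1 ≤ ‖c - c'‖ := by
    intro k
    induction k with
    | zero => exact ⟨∅, by simp⟩
    | succ k ih =>
      obtain ⟨N, hk, hN, hsep⟩ := ih
      obtain ⟨x, hx, hfar⟩ := hcon N (Besicovitch.card_le_of_separated N hN hsep) hN
      have hxN : x ∉ N := fun h => by
        have := hfar x h
        simp at this
        linarith
      refine ⟨insert x N, by rw [Finset.card_insert_of_notMem hxN, hk], ?_, ?_⟩
      · intro c hc
        rcases Finset.mem_insert.1 hc with rfl | hc
        exacts [hx, hN c hc]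
      · intro c hc c' hc' hne
        rcases Finset.mem_insert.1 hc with rfl | hcN <;>
          rcases Finset.mem_insert.1 hc' with rfl | hcN'
        · exact absurd rfl hne
        · exact hfar c' hcN'
        · rw [norm_sub_rev]
          exact hfar c hcN
        · exact hsep c hcN c' hcN' hne
  obtain ⟨N, hk, hN, hsep⟩ := hgrow (5 ^ Module.finrank ℝ E + 1)
  have := Besicovitch.card_le_of_separated N hN hsep
  omega

lemma sum_dotProduct_sq_le_of_net {m n : ℕ} (a : Fin m → Fin n → ℝ)
    (N : Finset (EuclideanSpace ℝ (Fin n)))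
    (hnet : ∀ x : EuclideanSpace ℝ (Fin n), ‖x‖ ≤ 2 → ∃ c ∈ N, ‖x - c‖ < 1) {R : ℝ}
    (hR : 0 ≤ R) (hN : ∀ c ∈ N, ∑ i, (a i ⬝ᵥ WithLp.ofLp c) ^ 2 ≤ R ^ 2) (x : Fin n → ℝ) :
    ∑ i, (a i ⬝ᵥ x) ^ 2 ≤ R ^ 2 * (x ⬝ᵥ x) := by
  set T : EuclideanSpace ℝ (Fin n) →L[ℝ] EuclideanSpace ℝ (Fin m) :=
    (Matrix.toEuclideanLin (Matrix.of a)).toContinuousLinearMap with hT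
  have hTx : ∀ y : EuclideanSpace ℝ (Fin n), ‖T y‖ ^ 2 = ∑ i, (a i ⬝ᵥ WithLp.ofLp y) ^ 2 := by
    intro y
    rw [EuclideanSpace.real_norm_sq_eq]
    rfl
  have hnorm : ‖T‖ ≤ R := by
    have hbound : ‖T‖ ≤ (R + ‖T‖) / 2 := by
      refine T.opNorm_le_bound (by positivity) fun y => ?_
      rcases eq_or_ne y 0 with rfl | hy
      · simp
      have hy' : 0 < ‖y‖ := norm_pos_iff.2 hy
      obtain ⟨c, hc, hyc⟩ := hnet ((2 / ‖y‖) • y) (by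
        rw [norm_smul, Real.norm_of_nonneg (by positivity), div_mul_cancel₀ _ hy'.ne'])
      have hTc : ‖T c‖ ≤ R := by
        refine le_of_sq_le_sq ?_ hR
        rw [hTx]
        exact hN c hc
      have h1 : ‖T ((2 / ‖y‖) • y)‖ ≤ R + ‖T‖ := by
        have h2 : T ((2 / ‖y‖) • y) = T c + T ((2 / ‖y‖) • y - c) := by simp
        rw [h2]
        refine (norm_add_le _ _).trans (add_le_add hTc ((T.le_opNorm _).trans ?_))
        exact mul_le_of_le_one_right (norm_nonneg _) hyc.le
      rw [map_smul, norm_smul, Real.norm_of_nonneg (by positivity), div_mul_eq_mul_div,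
        div_le_iff₀ hy'] at h1
      linarith
    linarith
  have h := hTx (WithLp.toLp 2 x)
  have hx : ‖WithLp.toLp 2 x‖ ^ 2 = x ⬝ᵥ x := by
    rw [EuclideanSpace.real_norm_sq_eq]
    simp [dotProduct, sq]
  change _ = ∑ i, (a i ⬝ᵥ x) ^ 2 at h
  rw [← h, ← hx, ← mul_pow]
  gcongr
  exact (T.le_opNorm _).trans (by gcongr)

/-- A Gaussian matrix has squared operator norm at most `80 (n + m)` with high probability. -/
lemma gaussMatrixMeasure_opNorm_le (m n : ℕ) :
    gaussMatrixMeasure m n {a | ∃ x : Fin n → ℝ,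
        80 * ((n : ℝ) + m) * (x ⬝ᵥ x) < ∑ i, (a i ⬝ᵥ x) ^ 2} ≤
      ENNReal.ofReal (2 * Real.exp (-(n : ℝ) / 2)) := by
  obtain ⟨N, hcard, hN2, hnet⟩ := exists_finset_net_closedBall (EuclideanSpace ℝ (Fin n))
  rw [finrank_euclideanSpace_fin] at hcard
  have hpoint : ∀ c ∈ N, gaussMatrixMeasure m n
      {a | 80 * ((n : ℝ) + m) ≤ ∑ i, (a i ⬝ᵥ WithLp.ofLp c) ^ 2} ≤
        ENNReal.ofReal (Real.exp (-(5 * n))) := by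
    intro c hc
    have hcc : WithLp.ofLp c ⬝ᵥ WithLp.ofLp c ≤ 4 := by
      have : WithLp.ofLp c ⬝ᵥ WithLp.ofLp c = ‖c‖ ^ 2 := by
        rw [EuclideanSpace.real_norm_sq_eq]
        simp [dotProduct, sq]
      rw [this]
      nlinarith [hN2 c hc, norm_nonneg c]
    have hcc0 : 0 ≤ WithLp.ofLp c ⬝ᵥ WithLp.ofLp c := by
      simpa using dotProduct_star_self_nonneg (WithLp.ofLp c)
    have hmoment := lintegral_exp_neg_sum_dotProduct_sq_le (fun _ : Unit => WithLp.ofLp c)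
      (-(1 / 16)) (by simp; linarith)
    have h := measure_pi_le_sum_le (Measure.pi fun _ : Fin n => gaussianReal 0 1)
      (fun _ _ x => 1 / 16 * (WithLp.ofLp c ⬝ᵥ x) ^ 2 - 1 / 2)
      (fun k => by simp only [dotProduct]; fun_prop)
      (fun k B => lintegral_exp_le_one_of_le hmoment fun x => by
        simp only [Finset.univ_unique, Finset.sum_singleton]
        nlinarith) m (5 * ((n : ℝ) + m) - m / 2)
    refine (measure_mono fun a ha => ?_).trans (h.trans ?_)
    · simp only [Set.mem_ofPred_eq, Finset.sum_sub_distrib, ← Finset.mul_sum, Finset.sum_const,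
        Finset.card_univ, Fintype.card_fin, nsmul_eq_mul, dotProduct_comm (WithLp.ofLp c)] at ha ⊢
      linarith
    · apply ENNReal.ofReal_le_ofReal
      rw [Real.exp_le_exp]
      have : (0 : ℝ) ≤ m := by positivity
      linarith
  calc _ ≤ gaussMatrixMeasure m n (⋃ c ∈ N,
        {a | 80 * ((n : ℝ) + m) ≤ ∑ i, (a i ⬝ᵥ WithLp.ofLp c) ^ 2}) := by
        refine measure_mono fun a ha => ?_
        obtain ⟨x, hx⟩ := ha
        by_contra hcon
        simp only [Set.mem_iUnion, Set.mem_ofPred_eq, not_exists, not_le] at hcon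
        have hsq : √(80 * ((n : ℝ) + m)) ^ 2 = 80 * ((n : ℝ) + m) :=
          Real.sq_sqrt (by positivity)
        have := sum_dotProduct_sq_le_of_net a N hnet (Real.sqrt_nonneg (80 * ((n : ℝ) + m)))
          (fun c hc => by rw [hsq]; exact (hcon c hc).le) x
        rw [hsq] at this
        linarith
    _ ≤ ∑ c ∈ N, ENNReal.ofReal (Real.exp (-(5 * n))) :=
        (measure_biUnion_finset_le _ _).trans (Finset.sum_le_sum hpoint)
    _ = ENNReal.ofReal (N.card * Real.exp (-(5 * n))) := by
        rw [Finset.sum_const, nsmul_eq_mul, ENNReal.ofReal_mul (by positivity),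
          ENNReal.ofReal_natCast]
    _ ≤ _ := by
        apply ENNReal.ofReal_le_ofReal
        have h5 : (N.card : ℝ) ≤ Real.exp (2 * n) := by
          have he : (5 : ℝ) ≤ Real.exp 2 := by
            have h1 := Real.exp_one_gt_d9
            have h2 : Real.exp 2 = Real.exp 1 * Real.exp 1 := by
              rw [← Real.exp_add]
              norm_num
            nlinarith
          calc (N.card : ℝ) ≤ 5 ^ n := by exact_mod_cast hcard
            _ ≤ Real.exp 2 ^ n := by gcongr
            _ = Real.exp (2 * n) := by rw [← Real.exp_nat_mul, mul_comm]
        have hn : (0 : ℝ) ≤ n := by positivity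
        calc (N.card : ℝ) * Real.exp (-(5 * n)) ≤ Real.exp (2 * n) * Real.exp (-(5 * n)) := by
              gcongr
          _ = Real.exp (-(3 * n)) := by
              rw [← Real.exp_add]
              congr 1
              ring
          _ ≤ Real.exp (-(n : ℝ) / 2) := Real.exp_le_exp.2 (by linarith)
          _ ≤ _ := by linarith [Real.exp_pos (-(n : ℝ) / 2)]

lemma sum_castLE_eq_sum_ite {m : ℕ} (j : Fin m) (g : Fin m → ℝ) :
    ∑ i : Fin j, g (i.castLE j.2.le) = ∑ i, if i < j then g i else 0 := by
  rw [← Finset.sum_filter]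
  refine Finset.sum_bij (fun i _ => i.castLE j.2.le) (fun i _ => ?_) (fun i _ i' _ h => ?_)
    (fun i hi => ?_) (fun _ _ => rfl)
  · exact Finset.mem_filter.2 ⟨Finset.mem_univ _, i.2⟩
  · simpa using h
  · exact ⟨⟨i, (Finset.mem_filter.1 hi).2⟩, Finset.mem_univ _, rfl⟩

lemma sum_sum_castLE_eq {m : ℕ} (g : Fin m → ℝ) :
    ∑ j : Fin m, ∑ i : Fin j, g (i.castLE j.2.le) = ∑ i : Fin m, ((m - 1 - i : ℕ) : ℝ) * g i := by
  simp_rw [sum_castLE_eq_sum_ite _ g]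
  rw [Finset.sum_comm]
  refine Finset.sum_congr rfl fun i _ => ?_
  rw [← Finset.sum_filter, Finset.sum_const, nsmul_eq_mul]
  congr 2
  rw [← Fin.card_Ioi]
  congr 1
  ext j
  simp

lemma sum_card_after_eq (m : ℕ) :
    ∑ i : Fin m, ((m - 1 - i : ℕ) : ℝ) = (m : ℝ) * ((m : ℝ) - 1) / 2 := by
  have h := sum_sum_castLE_eq (m := m) (fun _ => 1)
  simp only [mul_one, Finset.sum_const, Finset.card_univ, Fintype.card_fin, nsmul_eq_mul] at h
  rw [← h, Fin.sum_univ_eq_sum_range (fun i => (i : ℝ)) m]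
  clear h
  induction m with
  | zero => simp
  | succ m ih =>
    rw [Finset.sum_range_succ, ih]
    push_cast
    ring

lemma two_mul_sum_lt_le {m : ℕ} (G : Fin m → Fin m → ℝ) (hG : ∀ i j, 0 ≤ G i j)
    (hsymm : ∀ i j, G i j = G j i) :
    2 * ∑ j : Fin m, ∑ i : Fin j, G (i.castLE j.2.le) j ≤ ∑ i, ∑ j, G i j := by
  have h1 : ∑ j : Fin m, ∑ i : Fin j, G (i.castLE j.2.le) j =
      ∑ j, ∑ i, if i < j then G i j else 0 :=
    Finset.sum_congr rfl fun j _ => sum_castLE_eq_sum_ite j fun i => G i j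
  have h2 : ∑ j, ∑ i, (if i < j then G i j else 0) =
      ∑ j, ∑ i, if j < i then G i j else 0 := by
    rw [Finset.sum_comm]
    simp_rw [fun i j => hsymm i j]
  rw [h1, two_mul]
  nth_rewrite 2 [h2]
  rw [← Finset.sum_add_distrib, Finset.sum_comm (f := G)]
  refine Finset.sum_le_sum fun j _ => ?_
  rw [← Finset.sum_add_distrib]
  refine Finset.sum_le_sum fun i _ => ?_
  rcases lt_trichotomy i j with h | h | h
  · simp [h, h.not_gt]
  · simp [h, hG]
  · simp [h, h.not_gt]

lemma frobSq_eq_sum_dotProduct {m n : ℕ} (a : Fin m → Fin n → ℝ) (d : Fin n → ℝ) :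
    frobSq (Matrix.of a * Matrix.diagonal d * (Matrix.of a)ᵀ) =
      ∑ i, ∑ j, ((d * a i) ⬝ᵥ a j) ^ 2 := by
  simp only [frobSq, Matrix.mul_apply (N := (Matrix.of a)ᵀ), Matrix.mul_diagonal, dotProduct,
    transpose_apply, of_apply, Pi.mul_apply, mul_comm (d _)]

lemma abs_le_supNorm {n : ℕ} (d : Fin n → ℝ) (k : Fin n) : |d k| ≤ supNorm d :=
  le_ciSup (f := fun i => |d i|) (Set.finite_range _).bddAbove k

lemma sq_le_supNorm_sq {n : ℕ} (d : Fin n → ℝ) (k : Fin n) : d k ^ 2 ≤ supNorm d ^ 2 := by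
  rw [← sq_abs]
  gcongr
  exact abs_le_supNorm d k

lemma mul_dotProduct_mul_le {n : ℕ} (d x : Fin n → ℝ) :
    (d * x) ⬝ᵥ (d * x) ≤ supNorm d ^ 2 * (x ⬝ᵥ x) := by
  simp only [dotProduct, Finset.mul_sum, Pi.mul_apply]
  refine Finset.sum_le_sum fun k _ => ?_
  have := mul_le_mul_of_nonneg_right (sq_le_supNorm_sq d k) (mul_self_nonneg (x k))
  linarith

lemma sum_sum_mul_dotProduct_sq_le {m n : ℕ} (a : Fin m → Fin n → ℝ) (d : Fin n → ℝ) {r : ℝ}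
    (hr : 0 ≤ r) (ha : ∀ x, ∑ i, (a i ⬝ᵥ x) ^ 2 ≤ r * (x ⬝ᵥ x)) :
    ∑ j, ∑ i, ((d * a i) ⬝ᵥ (d * a j)) ^ 2 ≤ m * (r * supNorm d ^ 2) ^ 2 := by
  have hself : ∀ x : Fin n → ℝ, 0 ≤ x ⬝ᵥ x := fun x => by
    simpa using dotProduct_star_self_nonneg x
  have hcol : ∀ j, ∑ i, ((d * a i) ⬝ᵥ (d * a j)) ^ 2 ≤
      r * supNorm d ^ 2 * ((d * a j) ⬝ᵥ (d * a j)) := by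
    intro j
    have h1 : ∀ i, (d * a i) ⬝ᵥ (d * a j) = a i ⬝ᵥ (d * (d * a j)) := fun i => by
      simp only [dotProduct, Pi.mul_apply]
      exact Finset.sum_congr rfl fun k _ => by ring
    simp_rw [h1]
    refine (ha _).trans ?_
    rw [mul_assoc, ← h1]
    gcongr
    exact mul_dotProduct_mul_le d _
  have hrow : ∀ j, (d * a j) ⬝ᵥ (d * a j) ≤ r * supNorm d ^ 2 := by
    intro j
    have h1 : ((d * a j) ⬝ᵥ (d * a j)) ^ 2 ≤ r * supNorm d ^ 2 * ((d * a j) ⬝ᵥ (d * a j)) :=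
      (Finset.single_le_sum (f := fun i => ((d * a i) ⬝ᵥ (d * a j)) ^ 2)
        (fun i _ => sq_nonneg _) (Finset.mem_univ j)).trans (hcol j)
    by_contra! hlt
    have h0 : 0 ≤ r * supNorm d ^ 2 := by positivity
    nlinarith
  calc _ ≤ ∑ _j : Fin m, (r * supNorm d ^ 2) ^ 2 := by
        refine Finset.sum_le_sum fun j _ => (hcol j).trans ?_
        rw [sq (r * _)]
        exact mul_le_mul_of_nonneg_left (hrow j) (by positivity)
    _ = _ := by simp

/-- Lower tail of the off-diagonal part, given the past rows. -/
lemma measure_offDiag_increment_le (m : ℕ) {n : ℕ} (d : Fin n → ℝ) {l : ℝ} (hl : 0 ≤ l) (s : ℝ) :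
    gaussMatrixMeasure m n {a | s ≤ ∑ j : Fin m,
      (-l * ∑ i : Fin j, ((d * a (i.castLE j.2.le)) ⬝ᵥ a j) ^ 2 +
        l * ∑ i : Fin j, (d * a (i.castLE j.2.le)) ⬝ᵥ (d * a (i.castLE j.2.le)) -
        4 * l ^ 2 * ∑ i : Fin j, ∑ i' : Fin j,
          ((d * a (i.castLE j.2.le)) ⬝ᵥ (d * a (i'.castLE j.2.le))) ^ 2)} ≤
      ENNReal.ofReal (Real.exp (-s)) := by
  refine measure_pi_le_sum_le (Measure.pi fun _ : Fin n => gaussianReal 0 1)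
    (fun k B x => -l * ∑ i, ((d * B i) ⬝ᵥ x) ^ 2 + l * ∑ i, (d * B i) ⬝ᵥ (d * B i) -
        4 * l ^ 2 * ∑ i, ∑ i', ((d * B i) ⬝ᵥ (d * B i')) ^ 2) (fun k => ?_) (fun k B => ?_) m s
  · simp only [dotProduct, Pi.mul_apply]
    fun_prop
  · refine lintegral_exp_le_one_of_le
      (lintegral_exp_neg_sum_dotProduct_sq_le (fun i => d * B i) l ?_) fun x => ?_
    · have : 0 ≤ l * ∑ i, (d * B i) ⬝ᵥ (d * B i) :=
        mul_nonneg hl (Finset.sum_nonneg fun i _ => by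
          simpa using dotProduct_star_self_nonneg (d * B i))
      linarith
    · linarith

/-- Lower tail of weighted sums of the squared norms of the rows of `A D`. -/
lemma measure_weighted_norm_sq_le (m : ℕ) {n : ℕ} (d : Fin n → ℝ) (w : ℕ → ℝ) (hw : ∀ k, 0 ≤ w k)
    {l : ℝ} (hl : 0 ≤ l) (s : ℝ) :
    gaussMatrixMeasure m n {a | s ≤ ∑ j : Fin m,
      (-l * (w j * (d * a j) ⬝ᵥ (d * a j)) + l * (w j * ∑ i, d i ^ 2) -
        4 * l ^ 2 * (w j ^ 2 * ∑ i, d i ^ 4))} ≤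
      ENNReal.ofReal (Real.exp (-s)) := by
  refine measure_pi_le_sum_le (Measure.pi fun _ : Fin n => gaussianReal 0 1)
    (fun k _ x => -l * (w k * (d * x) ⬝ᵥ (d * x)) + l * (w k * ∑ i, d i ^ 2) -
        4 * l ^ 2 * (w k ^ 2 * ∑ i, d i ^ 4)) (fun k => ?_) (fun k B => ?_) m s
  · simp only [dotProduct, Pi.mul_apply]
    fun_prop
  · have hs : ∀ i, -(1 / 4) ≤ l * w k * d i ^ 2 := fun i => by
      have := mul_nonneg (mul_nonneg hl (hw k)) (sq_nonneg (d i))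
      linarith
    refine lintegral_exp_le_one_of_le (lintegral_exp_neg_sum_sq_le _ hs) fun x => le_of_eq ?_
    have h1 : ∑ i, l * w k * d i ^ 2 * x i ^ 2 = l * (w k * (d * x) ⬝ᵥ (d * x)) := by
      simp only [dotProduct, Pi.mul_apply, Finset.mul_sum]
      exact Finset.sum_congr rfl fun i _ => by ring
    have h2 : ∑ i, (l * w k * d i ^ 2) ^ 2 = l ^ 2 * (w k ^ 2 * ∑ i, d i ^ 4) := by
      simp only [Finset.mul_sum]
      exact Finset.sum_congr rfl fun i _ => by ring
    rw [h1, h2, ← Finset.mul_sum]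
    ring

lemma sum_castLE_castLE_le {m : ℕ} (P : Fin m → Fin m → ℝ) (hP : ∀ i i', 0 ≤ P i i') :
    ∑ j : Fin m, ∑ i : Fin j, ∑ i' : Fin j, P (i.castLE j.2.le) (i'.castLE j.2.le) ≤
      m * ∑ i', ∑ i, P i i' := by
  have h : ∀ j : Fin m, ∑ i : Fin j, ∑ i' : Fin j, P (i.castLE j.2.le) (i'.castLE j.2.le) ≤
      ∑ i', ∑ i, P i i' := by
    intro j
    rw [Finset.sum_comm (f := fun i' i => P i i')]
    have hle : ∀ g : Fin m → ℝ, (∀ i, 0 ≤ g i) → ∑ i : Fin j, g (i.castLE j.2.le) ≤ ∑ i, g i := by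
      intro g hg
      rw [sum_castLE_eq_sum_ite]
      exact Finset.sum_le_sum fun i _ => by split_ifs <;> simp [hg]
    calc _ ≤ ∑ i : Fin j, ∑ i', P (i.castLE j.2.le) i' :=
          Finset.sum_le_sum fun i _ => hle _ fun i' => hP _ i'
      _ ≤ _ := hle (fun i => ∑ i', P i i') fun i => Finset.sum_nonneg fun i' _ => hP i i'
  refine (Finset.sum_le_sum fun j _ => h j).trans ?_
  simp

lemma sum_weight_sq_mul_le {m n : ℕ} (d : Fin n → ℝ) :
    ∑ j : Fin m, (((m - 1 - j : ℕ) : ℝ) ^ 2 * ∑ i, d i ^ 4) ≤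
      m * (m * (80 * ((n : ℝ) + m) * supNorm d ^ 2) ^ 2) := by
  have h1 : ∑ i, d i ^ 4 ≤ n * supNorm d ^ 4 := by
    calc ∑ i, d i ^ 4 ≤ ∑ _i : Fin n, supNorm d ^ 4 := by
          refine Finset.sum_le_sum fun i _ => ?_
          have := pow_le_pow_left₀ (sq_nonneg (d i)) (sq_le_supNorm_sq d i) 2
          calc d i ^ 4 = (d i ^ 2) ^ 2 := by ring
            _ ≤ _ := this
            _ = _ := by ring
      _ = _ := by simp
  have h0 : 0 ≤ ∑ i, d i ^ 4 := Finset.sum_nonneg fun i _ => by positivity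
  have hK : 0 ≤ supNorm d ^ 4 := by positivity
  calc _ ≤ ∑ _j : Fin m, (m : ℝ) ^ 2 * (n * supNorm d ^ 4) := by
        refine Finset.sum_le_sum fun j _ => ?_
        gcongr
        omega
    _ = (m : ℝ) * (m * ((m * n) * supNorm d ^ 4)) := by
        rw [Finset.sum_const, Finset.card_univ, Fintype.card_fin, nsmul_eq_mul]
        ring
    _ ≤ m * (m * (6400 * ((n : ℝ) + m) ^ 2 * supNorm d ^ 4)) := by
        have : (m : ℝ) * n ≤ 6400 * ((n : ℝ) + m) ^ 2 := by
          have h2 : (0 : ℝ) ≤ m * n := by positivity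
          nlinarith [sq_nonneg (n : ℝ), sq_nonneg (m : ℝ)]
        gcongr
    _ = _ := by ring

lemma frobSq_lower_event_subset {m n : ℕ} (d : Fin n → ℝ) {t l : ℝ} (hl : 0 ≤ l) :
    {a : Fin m → Fin n → ℝ | frobSq (Matrix.of a * Matrix.diagonal d * (Matrix.of a)ᵀ) ≤
        (m : ℝ) * ((m : ℝ) - 1) * (∑ i, (d i) ^ 2) - t} ⊆
      ({a | l * (t / 4) - 4 * l ^ 2 * (m * (m * (80 * ((n : ℝ) + m) * supNorm d ^ 2) ^ 2)) ≤
        ∑ j : Fin m, (-l * ∑ i : Fin j, ((d * a (i.castLE j.2.le)) ⬝ᵥ a j) ^ 2 +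
          l * ∑ i : Fin j, (d * a (i.castLE j.2.le)) ⬝ᵥ (d * a (i.castLE j.2.le)) -
          4 * l ^ 2 * ∑ i : Fin j, ∑ i' : Fin j,
            ((d * a (i.castLE j.2.le)) ⬝ᵥ (d * a (i'.castLE j.2.le))) ^ 2)} ∪
      {a | l * (t / 4) - 4 * l ^ 2 * (m * (m * (80 * ((n : ℝ) + m) * supNorm d ^ 2) ^ 2)) ≤
        ∑ j : Fin m, (-l * (((m - 1 - j : ℕ) : ℝ) * (d * a j) ⬝ᵥ (d * a j)) +
          l * (((m - 1 - j : ℕ) : ℝ) * ∑ i, d i ^ 2) -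
          4 * l ^ 2 * (((m - 1 - j : ℕ) : ℝ) ^ 2 * ∑ i, d i ^ 4))}) ∪
      {a | ∃ x : Fin n → ℝ, 80 * ((n : ℝ) + m) * (x ⬝ᵥ x) < ∑ i, (a i ⬝ᵥ x) ^ 2} := by
  intro a ha
  by_contra hcon
  simp only [Set.mem_union, Set.mem_ofPred_eq, not_or, not_le, not_exists, not_lt] at hcon ha
  obtain ⟨⟨h1, h2⟩, h3⟩ := hcon
  rw [frobSq_eq_sum_dotProduct] at ha
  have hoff := two_mul_sum_lt_le (fun i j => ((d * a i) ⬝ᵥ a j) ^ 2) (fun i j => sq_nonneg _)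
    fun i j => by
      congr 1
      simp only [dotProduct, Pi.mul_apply]
      exact Finset.sum_congr rfl fun k _ => by ring
  have hnorm := sum_sum_castLE_eq fun i : Fin m => (d * a i) ⬝ᵥ (d * a i)
  have hq1 := (sum_castLE_castLE_le (fun i i' => ((d * a i) ⬝ᵥ (d * a i')) ^ 2)
    fun i i' => sq_nonneg _).trans (mul_le_mul_of_nonneg_left
      (sum_sum_mul_dotProduct_sq_le a d (by positivity) h3) m.cast_nonneg)
  have hq2 := sum_weight_sq_mul_le (m := m) d
  have hcard := sum_card_after_eq m
  rw [Finset.sum_sub_distrib, Finset.sum_add_distrib, ← Finset.mul_sum, ← Finset.mul_sum,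
    ← Finset.mul_sum] at h1 h2
  rw [hnorm] at h1
  rw [← Finset.sum_mul (s := Finset.univ) (f := fun j : Fin m => ((m - 1 - j : ℕ) : ℝ)),
    hcard] at h2
  have h4 := mul_le_mul_of_nonneg_left (hoff.trans ha) hl
  have h5 := mul_le_mul_of_nonneg_left hq1 (by positivity : (0 : ℝ) ≤ 4 * l ^ 2)
  have h6 := mul_le_mul_of_nonneg_left hq2 (by positivity : (0 : ℝ) ≤ 4 * l ^ 2)
  linarith

/-- Lower-tail bound for `‖A D Aᵀ‖_HS²` for a matrix `A` with i.i.d. `N(0,1)` entries and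
`D = diag(d)`: there are absolute constants `C` (from the decoupling inequality) and `c`
(from the Hanson–Wright inequality) such that for every `t > 0`,
`P(‖A D Aᵀ‖_HS² ≤ m(m−1) ∑ dᵢ² − t)
  ≤ 2C exp(−c min(t²/(C²‖d‖_∞⁴ q_{m,n}), t/(C‖d‖_∞² q̃_{m,n}))) + 2e^{−n/2}`,
where `q_{m,n} = m²(2√n + √m)⁴` and `q̃_{m,n} = (2√n + √m)²`. -/
theorem ADA_frobenius_lower_tail :
    ∃ C c : ℝ, 0 < C ∧ 0 < c ∧
      ∀ (m n : ℕ) (d : Fin n → ℝ) (t : ℝ), 0 < t →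
        gaussMatrixMeasure m n
            {a | frobSq (Matrix.of a * Matrix.diagonal d * (Matrix.of a)ᵀ) ≤
              (m : ℝ) * ((m : ℝ) - 1) * (∑ i, (d i) ^ 2) - t} ≤
          ENNReal.ofReal (2 * C * Real.exp (-c *
              min (t ^ 2 / (C ^ 2 * (supNorm d) ^ 4 *
                    ((m : ℝ) ^ 2 * (2 * Real.sqrt n + Real.sqrt m) ^ 4)))
                (t / (C * (supNorm d) ^ 2 * (2 * Real.sqrt n + Real.sqrt m) ^ 2)))) +
            ENNReal.ofReal (2 * Real.exp (-(n : ℝ) / 2)) := by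
  refine ⟨1, 1 / 1638400, one_pos, by norm_num, fun m n d t ht => ?_⟩
  by_cases hpos : (m : ℝ) * supNorm d = 0
  · have hempty : {a : Fin m → Fin n → ℝ |
        frobSq (Matrix.of a * Matrix.diagonal d * (Matrix.of a)ᵀ) ≤
          (m : ℝ) * ((m : ℝ) - 1) * (∑ i, (d i) ^ 2) - t} = ∅ := by
      refine Set.eq_empty_iff_forall_notMem.2 fun a ha => ?_
      have hS : (m : ℝ) * ∑ i, d i ^ 2 = 0 := by
        rcases mul_eq_zero.1 hpos with h | h
        · rw [h, zero_mul]
        · rw [Finset.sum_eq_zero fun i _ => ?_, mul_zero]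
          have := sq_le_supNorm_sq d i
          rw [h] at this
          exact le_antisymm (by simpa using this) (sq_nonneg _)
      have h0 : 0 ≤ frobSq (Matrix.of a * Matrix.diagonal d * (Matrix.of a)ᵀ) :=
        Finset.sum_nonneg fun i _ => Finset.sum_nonneg fun j _ => sq_nonneg _
      have h1 : frobSq (Matrix.of a * Matrix.diagonal d * (Matrix.of a)ᵀ) ≤
          (m : ℝ) * ((m : ℝ) - 1) * (∑ i, (d i) ^ 2) - t := ha
      rw [mul_right_comm, hS, zero_mul] at h1
      linarith
    rw [hempty, measure_empty]
    exact zero_le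
  obtain ⟨hm, hK⟩ := mul_ne_zero_iff.1 hpos
  have hm0 : (0 : ℝ) < m := lt_of_le_of_ne m.cast_nonneg (Ne.symm hm)
  set q : ℝ := m * (m * (80 * ((n : ℝ) + m) * supNorm d ^ 2) ^ 2) with hq
  have hnm : (0 : ℝ) < (n : ℝ) + m := by positivity
  have hq0 : 0 < q := by positivity
  have hl : 0 ≤ t / (32 * q) := by positivity
  have hlevel : t / (32 * q) * (t / 4) - 4 * (t / (32 * q)) ^ 2 * q = t ^ 2 / (256 * q) := by
    field_simp
    ring
  have hexp : Real.exp (-(t ^ 2 / (256 * q))) ≤ Real.exp (-(1 / 1638400) *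
      min (t ^ 2 / ((1 : ℝ) ^ 2 * (supNorm d) ^ 4 *
        ((m : ℝ) ^ 2 * (2 * Real.sqrt n + Real.sqrt m) ^ 4)))
      (t / (1 * (supNorm d) ^ 2 * (2 * Real.sqrt n + Real.sqrt m) ^ 2))) := by
    rw [Real.exp_le_exp, neg_mul, neg_le_neg_iff]
    refine (mul_le_mul_of_nonneg_left (min_le_left _ _) (by norm_num)).trans ?_
    have hL : (n : ℝ) + m ≤ (2 * Real.sqrt n + Real.sqrt m) ^ 2 := by
      have h1 := Real.sq_sqrt (n.cast_nonneg : (0 : ℝ) ≤ n)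
      have h2 := Real.sq_sqrt (m.cast_nonneg : (0 : ℝ) ≤ m)
      have h3 := mul_nonneg (Real.sqrt_nonneg (n : ℝ)) (Real.sqrt_nonneg (m : ℝ))
      nlinarith [(n.cast_nonneg : (0 : ℝ) ≤ n)]
    have hL2 : ((n : ℝ) + m) ^ 2 ≤ (2 * Real.sqrt n + Real.sqrt m) ^ 4 :=
      (pow_le_pow_left₀ hnm.le hL 2).trans_eq (by ring)
    calc 1 / 1638400 * (t ^ 2 / ((1 : ℝ) ^ 2 * (supNorm d) ^ 4 *
          ((m : ℝ) ^ 2 * (2 * Real.sqrt n + Real.sqrt m) ^ 4)))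
        ≤ 1 / 1638400 * (t ^ 2 / ((1 : ℝ) ^ 2 * (supNorm d) ^ 4 *
          ((m : ℝ) ^ 2 * ((n : ℝ) + m) ^ 2))) := by gcongr
      _ = t ^ 2 / (256 * q) := by
          rw [hq]
          field_simp
          norm_num
  refine (measure_mono (frobSq_lower_event_subset d hl)).trans ((measure_union_le _ _).trans
    (add_le_add ((measure_union_le _ _).trans ?_) (gaussMatrixMeasure_opNorm_le m n)))
  rw [← hq, hlevel]
  refine (add_le_add (measure_offDiag_increment_le m d hl _)
    (measure_weighted_norm_sq_le m d (fun k => ((m - 1 - k : ℕ) : ℝ))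
      (fun k => Nat.cast_nonneg _) hl _)).trans ?_
  rw [← ENNReal.ofReal_add (Real.exp_pos _).le (Real.exp_pos _).le]
  exact ENNReal.ofReal_le_ofReal (by linarith)
end
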